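/- For every x ∈ ℝⁿ and t > 0, the set of reachable gradients of u at (x,t) satisfies D*u(x,t) = {(Dg(y), −|Dg(y)|) : y ∈ L(x,t)} ⊂ ℝⁿ × ℝ. Consequently p ↦ (spatial component of p) gives a one-to-one correspondence between D*u(x,t) and the set {Dg(y) : y ∈ L(x,t)}. -/

import Mathlib

open scoped InnerProductSpace Topology ENNReal
open Filter

noncomputable section

/-- Euclidean space `ℝⁿ`. -/
abbrev Euc (n : ℕ) := EuclideanSpace ℝ (Fin n)

/-- Hopf–Lax solution of the Eikonal equation `uₜ + |∇u| = 0` with initial data `g`: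
`u(x,t) = min {g(y) : |y - x| ≤ t}`. -/
def HLu {n : ℕ} (g : Euc n → ℝ) (x : Euc n) (t : ℝ) : ℝ :=
  sInf (g '' Metric.closedBall x t)

/-- The set of minimizers `L(x,t) = {y : |y - x| ≤ t ∧ g y = u(x,t)}`. -/
def HLL {n : ℕ} (g : Euc n → ℝ) (x : Euc n) (t : ℝ) : Set (Euc n) :=
  {y | ‖y - x‖ ≤ t ∧ g y = HLu g x t}

/-- The continuous linear map `(v,s) ↦ ⟪w, v⟫ + a • s` on `ℝⁿ × ℝ`, representing the
total derivative with spatial gradient `w` and time derivative `a`. -/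
def gradCLM {n : ℕ} (w : Euc n) (a : ℝ) : (Euc n × ℝ) →L[ℝ] ℝ :=
  (innerSL ℝ w).comp (ContinuousLinearMap.fst ℝ (Euc n) ℝ) +
    a • ContinuousLinearMap.snd ℝ (Euc n) ℝ

/-- The set of reachable gradients `D*u(x,t)`, represented as pairs `(∇u, uₜ) ∈ ℝⁿ × ℝ`:
limits of total derivatives of `u` along sequences of points of differentiability
converging to `p₀`. -/
def Dstar {n : ℕ} (g : Euc n → ℝ) (p₀ : Euc n × ℝ) : Set (Euc n × ℝ) :=
  {q | ∃ z : ℕ → Euc n × ℝ, (∀ k, 0 < (z k).2) ∧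
    Filter.Tendsto z Filter.atTop (𝓝 p₀) ∧
    ∃ d : ℕ → Euc n × ℝ,
      (∀ k, HasFDerivAt (fun q : Euc n × ℝ => HLu g q.1 q.2)
        (gradCLM (d k).1 (d k).2) (z k)) ∧
      Filter.Tendsto d Filter.atTop (𝓝 q)}

section helpers

variable {n : ℕ} {g : Euc n → ℝ} {Dg : Euc n → Euc n}

lemma HL_le (hc : Continuous g) {x w : Euc n} {t : ℝ} (hw : ‖w - x‖ ≤ t) :
    HLu g x t ≤ g w := by
  unfold HLu
  apply csInf_le
  · exact ((isCompact_closedBall x t).image hc).bddBelow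
  · exact ⟨w, by rwa [Metric.mem_closedBall, dist_eq_norm], rfl⟩

lemma HL_exists (hc : Continuous g) (x : Euc n) {t : ℝ} (ht : 0 < t) :
    ∃ y, y ∈ HLL g x t := by
  have h := ((isCompact_closedBall x t).image hc).sInf_mem
    ((Metric.nonempty_closedBall.2 ht.le).image g)
  obtain ⟨y, hy, hy2⟩ := h
  exact ⟨y, by rwa [Metric.mem_closedBall, dist_eq_norm] at hy, hy2⟩

lemma HL_mem (hc : Continuous g) {x y : Euc n} {t : ℝ} (ht : 0 < t) (hy : ‖y - x‖ ≤ t)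
    (h : ∀ w, ‖w - x‖ ≤ t → g y ≤ g w) : y ∈ HLL g x t := by
  obtain ⟨z, hz, hz2⟩ := HL_exists hc x ht
  refine ⟨hy, le_antisymm ?_ (HL_le hc hy)⟩
  rw [← hz2]; exact h z hz

lemma HL_dir {x y : Euc n} {t : ℝ} (ht : 0 < t) (hy : ‖y - x‖ ≤ t) :
    ∃ e : Euc n, ‖e‖ ≤ 1 ∧ y = x + t • e := by
  refine ⟨t⁻¹ • (y - x), ?_, ?_⟩
  · rw [norm_smul, norm_inv, Real.norm_of_nonneg ht.le]
    rw [inv_mul_le_iff₀ ht]; simpa using hy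
  · rw [smul_smul, mul_inv_cancel₀ ht.ne', one_smul]; abel

lemma HL_le' (hc : Continuous g) {x e : Euc n} {t : ℝ} (ht : 0 ≤ t) (he : ‖e‖ ≤ 1) :
    HLu g x t ≤ g (x + t • e) := by
  apply HL_le hc
  rw [add_sub_cancel_left, norm_smul, Real.norm_of_nonneg ht]
  exact mul_le_of_le_one_right ht he

lemma HL_curve (hg : ∀ y, HasGradientAt g (Dg y) y) (y v : Euc n) :
    HasDerivAt (fun s : ℝ => g (y + s • v)) (inner ℝ (Dg y) v) 0 := by
  have h1 : HasDerivAt (fun s : ℝ => y + s • v) v 0 := by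
    simpa using ((hasDerivAt_id (0 : ℝ)).smul_const v).const_add y
  have h2 := (hg y).hasFDerivAt
  have h3 : HasFDerivAt g (InnerProductSpace.toDual ℝ (Euc n) (Dg y)) (y + (0 : ℝ) • v) := by
    simpa using h2
  have h4 := h3.comp_hasDerivAt (0 : ℝ) h1
  rw [InnerProductSpace.toDual_apply_apply] at h4
  exact h4

/-- a negative directional derivative decreases the function -/
lemma HL_decr (hg : ∀ y, HasGradientAt g (Dg y) y) (y v : Euc n) (h : inner ℝ (Dg y) v < 0) :
    ∀ᶠ s in 𝓝[>] (0 : ℝ), g (y + s • v) < g y := by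
  have h1 := (HL_curve hg y v).hasDerivWithinAt (s := Set.Ioi 0)
  rw [hasDerivWithinAt_iff_tendsto_slope' (by simp)] at h1
  have h2 := h1.eventually (gt_mem_nhds h)
  filter_upwards [h2, self_mem_nhdsWithin] with s hs hs0
  rw [slope_def_field] at hs
  simp only [zero_smul, add_zero, sub_zero] at hs
  have := (div_lt_iff₀ (show (0:ℝ) < s from hs0)).1 hs
  linarith

lemma HL_inner (hc : Continuous g) (hg : ∀ y, HasGradientAt g (Dg y) y) {x e : Euc n} {t : ℝ}
    (ht : 0 < t) (he : ‖e‖ ≤ 1) (hy : x + t • e ∈ HLL g x t) :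
    inner ℝ (Dg (x + t • e)) e = -‖Dg (x + t • e)‖ := by
  set p := Dg (x + t • e) with hp
  have h1 : -‖p‖ ≤ inner ℝ p e := by
    have := abs_real_inner_le_norm p e
    have h2 := (abs_le.1 this).1
    nlinarith [norm_nonneg p, norm_nonneg e]
  refine le_antisymm ?_ h1
  by_contra! hlt
  have hp0 : 0 < ‖p‖ := by
    rw [norm_pos_iff]; rintro h0; simp [h0] at hlt
  set f : Euc n := -(‖p‖⁻¹ • p) with hf
  have hfn : ‖f‖ ≤ 1 := by
    rw [hf, norm_neg, norm_smul, norm_inv, norm_norm, inv_mul_cancel₀ hp0.ne']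
  have hpf : inner ℝ p f = -‖p‖ := by
    rw [hf, inner_neg_right, inner_smul_right, real_inner_self_eq_norm_sq]
    field_simp
  have h3 : inner ℝ p (f - e) < 0 := by
    rw [inner_sub_right, hpf]; linarith
  have h4 := HL_decr hg (x + t • e) (f - e) h3
  have h5 : ∀ᶠ s in 𝓝[>] (0 : ℝ), s < t := nhdsWithin_le_nhds (gt_mem_nhds ht)
  obtain ⟨s, ⟨hs1, hs2⟩, hs3⟩ := ((h4.and h5).and self_mem_nhdsWithin).exists
  have hs3 : 0 < s := hs3
  have h6 : ‖x + t • e + s • (f - e) - x‖ ≤ t := by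
    have : x + t • e + s • (f - e) - x = (t - s) • e + s • f := by module
    rw [this]
    refine (norm_add_le _ _).trans ?_
    rw [norm_smul, norm_smul, Real.norm_of_nonneg hs3.le, Real.norm_of_nonneg (by linarith)]
    nlinarith
  have h7 := HL_le hc h6
  rw [← hy.2] at h7
  linarith

lemma gradCLM_apply (w : Euc n) (a : ℝ) (q : Euc n × ℝ) :
    gradCLM w a q = inner ℝ w q.1 + a * q.2 := by
  simp [gradCLM]

lemma exists_gradCLM (L : (Euc n × ℝ) →L[ℝ] ℝ) : ∃ w a, L = gradCLM w a := by
  refine ⟨(InnerProductSpace.toDual ℝ (Euc n)).symm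
    (L.comp (ContinuousLinearMap.inl ℝ (Euc n) ℝ)), L (0, 1), ?_⟩
  ext q
  · simp [gradCLM_apply]
  · simp [gradCLM_apply]

lemma HL_fderiv (hc : Continuous g) (hg : ∀ y, HasGradientAt g (Dg y) y) {z : Euc n × ℝ}
    {y : Euc n} (ht : 0 < z.2) (hy : y ∈ HLL g z.1 z.2) {w : Euc n} {a : ℝ}
    (h : HasFDerivAt (fun q : Euc n × ℝ => HLu g q.1 q.2) (gradCLM w a) z) :
    w = Dg y ∧ a = -‖Dg y‖ := by
  obtain ⟨e, he, rfl⟩ := HL_dir ht hy.1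
  have hin := HL_inner hc hg ht he hy
  set p := Dg (z.1 + z.2 • e) with hp
  have h1 : HasFDerivAt (fun q : Euc n × ℝ => q.1 + q.2 • e)
      (ContinuousLinearMap.fst ℝ (Euc n) ℝ +
        (ContinuousLinearMap.snd ℝ (Euc n) ℝ).smulRight e) z :=
    hasFDerivAt_fst.add (hasFDerivAt_snd.smul_const e)
  have h2 := ((hg (z.1 + z.2 • e)).hasFDerivAt.comp z h1).sub h
  have hmin : IsLocalMin ((g ∘ fun q : Euc n × ℝ => q.1 + q.2 • e) -
      (fun q : Euc n × ℝ => HLu g q.1 q.2)) z := by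
    have : ∀ᶠ q : Euc n × ℝ in 𝓝 z, 0 < q.2 :=
      (continuous_snd.tendsto z).eventually (lt_mem_nhds ht)
    filter_upwards [this] with q hq
    have := HL_le' hc (x := q.1) hq.le he
    have h3 := hy.2
    simp only [Pi.sub_apply, Function.comp]
    linarith
  have h0 := hmin.hasFDerivAt_eq_zero h2
  have hv : ∀ q : Euc n × ℝ, inner ℝ p (q.1 + q.2 • e) = inner ℝ w q.1 + a * q.2 := by
    intro q
    have := congrArg (fun L => L q) h0
    simp only [sub_apply, gradCLM_apply] at this
    simp at this
    rw [← hp] at this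
    rw [inner_add_right, inner_smul_right]
    linarith
  constructor
  · refine ext_inner_right ℝ fun v => ?_
    simpa using (hv (v, 0)).symm
  · have := hv (0, 1)
    simp at this
    linarith

lemma HL_compact (hc : Continuous g) {x : Euc n} {t : ℝ} (ht : 0 < t) {z : ℕ → Euc n × ℝ}
    (hz : ∀ k, 0 < (z k).2) (hlim : Tendsto z atTop (𝓝 (x, t))) {y : ℕ → Euc n}
    (hy : ∀ k, y k ∈ HLL g (z k).1 (z k).2) :
    ∃ y₀ ∈ HLL g x t, ∃ φ : ℕ → ℕ, StrictMono φ ∧ Tendsto (y ∘ φ) atTop (𝓝 y₀) := by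
  have l1 : Tendsto (fun k => (z k).1) atTop (𝓝 x) := (continuous_fst.tendsto _).comp hlim
  have l2 : Tendsto (fun k => (z k).2) atTop (𝓝 t) := (continuous_snd.tendsto _).comp hlim
  have hb : ∃ᶠ k in atTop, y k ∈ Metric.closedBall x (t + 2) := by
    apply Eventually.frequently
    have a1 := l1.eventually (Metric.ball_mem_nhds x one_pos)
    have a2 := l2.eventually (gt_mem_nhds (show t < t + 1 by linarith))
    filter_upwards [a1, a2] with k h1 h2
    have h3 := (hy k).1
    rw [← dist_eq_norm] at h3
    rw [Metric.mem_closedBall]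
    have := dist_triangle (y k) (z k).1 x
    linarith
  obtain ⟨y₀, -, φ, hφ, hlimy⟩ :=
    tendsto_subseq_of_frequently_bounded Metric.isBounded_closedBall hb
  refine ⟨y₀, ?_, φ, hφ, hlimy⟩
  have m1 := l1.comp hφ.tendsto_atTop
  have m2 := l2.comp hφ.tendsto_atTop
  apply HL_mem hc ht
  · exact le_of_tendsto_of_tendsto' (hlimy.sub m1).norm m2 fun k => (hy (φ k)).1
  · intro w hw
    obtain ⟨e, he, rfl⟩ := HL_dir ht hw
    have m3 : Tendsto (fun k => g ((z (φ k)).1 + (z (φ k)).2 • e)) atTop (𝓝 (g (x + t • e))) :=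
      (hc.tendsto _).comp (m1.add (m2.smul_const e))
    refine le_of_tendsto_of_tendsto' ((hc.tendsto _).comp hlimy) m3 fun k => ?_
    simp only [Function.comp]
    rw [(hy (φ k)).2]
    exact HL_le' hc (hz _).le he

lemma Dstar_sub (hc : Continuous g) (hg : ∀ y, HasGradientAt g (Dg y) y) (hDg : Continuous Dg)
    {x : Euc n} {t : ℝ} (ht : 0 < t) {q : Euc n × ℝ} (hq : q ∈ Dstar g (x, t)) :
    ∃ y ∈ HLL g x t, q = (Dg y, -‖Dg y‖) := by
  obtain ⟨z, hz, hlim, d, hd, hdl⟩ := hq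
  choose y hy using fun k => HL_exists hc (z k).1 (hz k)
  obtain ⟨y₀, hy₀, φ, hφ, hl⟩ := HL_compact hc ht hz hlim hy
  refine ⟨y₀, hy₀, ?_⟩
  have h1 : Tendsto (fun k => (Dg (y (φ k)), -‖Dg (y (φ k))‖)) atTop (𝓝 (Dg y₀, -‖Dg y₀‖)) := by
    have := (hDg.tendsto y₀).comp hl
    exact this.prodMk_nhds this.norm.neg
  refine tendsto_nhds_unique ((hdl.comp hφ.tendsto_atTop).congr fun k => ?_) h1
  have := HL_fderiv hc hg (hz (φ k)) (hy (φ k)) (hd (φ k))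
  exact Prod.ext this.1 this.2

lemma Dstar_of_approx {p₀ q : Euc n × ℝ} (h : ∀ ε > 0, ∃ z d : Euc n × ℝ, 0 < z.2 ∧
    dist z p₀ < ε ∧ HasFDerivAt (fun q : Euc n × ℝ => HLu g q.1 q.2) (gradCLM d.1 d.2) z ∧
    dist d q < ε) : q ∈ Dstar g p₀ := by
  choose z d h1 h2 h3 h4 using fun k : ℕ => h (1 / ((k : ℝ) + 1)) Nat.one_div_pos_of_nat
  refine ⟨z, h1, ?_, d, h3, ?_⟩
  · rw [tendsto_iff_dist_tendsto_zero]
    exact squeeze_zero (fun _ => dist_nonneg) (fun k => (h2 k).le)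
      tendsto_one_div_add_atTop_nhds_zero_nat
  · rw [tendsto_iff_dist_tendsto_zero]
    exact squeeze_zero (fun _ => dist_nonneg) (fun k => (h4 k).le)
      tendsto_one_div_add_atTop_nhds_zero_nat

lemma Dstar_approx {p₀ q : Euc n × ℝ} (h : q ∈ Dstar g p₀) {ε : ℝ} (hε : 0 < ε) :
    ∃ z d : Euc n × ℝ, 0 < z.2 ∧
    dist z p₀ < ε ∧ HasFDerivAt (fun q : Euc n × ℝ => HLu g q.1 q.2) (gradCLM d.1 d.2) z ∧
    dist d q < ε := by
  obtain ⟨z, hz, hlim, d, hd, hdl⟩ := h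
  obtain ⟨k, h1, h2⟩ := ((hlim.eventually (Metric.ball_mem_nhds _ hε)).and
    (hdl.eventually (Metric.ball_mem_nhds _ hε))).exists
  exact ⟨z k, d k, hz k, h1, hd k, h2⟩

lemma HL_diff (hc : Continuous g) (hg : ∀ y, HasGradientAt g (Dg y) y) (hDg : Continuous Dg)
    (x : Euc n) {t : ℝ} (ht : 0 < t) {ε : ℝ} (hε : 0 < ε) :
    ∃ z : Euc n × ℝ, 0 < z.2 ∧ dist z (x, t) < ε ∧
      DifferentiableAt ℝ (fun q : Euc n × ℝ => HLu g q.1 q.2) z := by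
  set B := Metric.closedBall x (2 * t + t) with hB
  obtain ⟨K, hK⟩ := (isCompact_closedBall x (2 * t + t)).exists_bound_of_continuousOn
    hDg.continuousOn
  have hK0 : 0 ≤ K := (norm_nonneg _).trans (hK x (by simp; linarith))
  have hL : ∀ a ∈ B, ∀ b ∈ B, g a ≤ g b + K * ‖a - b‖ := by
    intro a ha b hb
    have := (convex_closedBall x (2 * t + t)).norm_image_sub_le_of_norm_hasFDerivWithin_le
      (f := g) (C := K) (fun y _ => (hg y).hasFDerivAt.hasFDerivWithinAt)
      (fun y hy => by simpa using hK y hy) hb ha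
    have := (le_abs_self _).trans this
    linarith
  set S := Metric.ball (x, t) t with hS
  have hSm : ∀ q ∈ S, ‖q.1 - x‖ < t ∧ 0 < q.2 ∧ q.2 < 2 * t := by
    intro q hq
    rw [hS, Metric.mem_ball, Prod.dist_eq, max_lt_iff] at hq
    obtain ⟨h1, h2⟩ := hq
    rw [Real.dist_eq, abs_lt] at h2
    simp only at h1 h2
    refine ⟨by rwa [dist_eq_norm] at h1, by linarith, by linarith⟩
  have hin : ∀ q ∈ S, ∀ e : Euc n, ‖e‖ ≤ 1 → q.1 + q.2 • e ∈ B := by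
    intro q hq e he
    obtain ⟨h1, h2, h3⟩ := hSm q hq
    rw [hB, Metric.mem_closedBall, dist_eq_norm, show q.1 + q.2 • e - x = (q.1 - x) + q.2 • e by abel]
    refine (norm_add_le _ _).trans ?_
    rw [norm_smul, Real.norm_of_nonneg h2.le]
    nlinarith
  have hlip : LipschitzOnWith (Real.toNNReal (K * 2)) (fun q : Euc n × ℝ => HLu g q.1 q.2) S := by
    apply LipschitzOnWith.of_le_add_mul
    intro q hq r hr
    obtain ⟨h1, h2, h3⟩ := hSm q hq
    obtain ⟨h1', h2', h3'⟩ := hSm r hr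
    obtain ⟨y, hy⟩ := HL_exists hc r.1 h2'
    obtain ⟨e, he, rfl⟩ := HL_dir h2' hy.1
    have a1 := HL_le' hc (x := q.1) h2.le he
    have a2 := hL _ (hin q hq e he) _ (hin r hr e he)
    have a3 : ‖q.1 + q.2 • e - (r.1 + r.2 • e)‖ ≤ 2 * dist q r := by
      rw [show q.1 + q.2 • e - (r.1 + r.2 • e) = (q.1 - r.1) + (q.2 - r.2) • e by module]
      refine (norm_add_le _ _).trans ?_
      rw [norm_smul, ← dist_eq_norm, ← dist_eq_norm]
      have b1 : dist q.1 r.1 ≤ dist q r := by rw [Prod.dist_eq]; exact le_max_left _ _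
      have b2 : dist q.2 r.2 ≤ dist q r := by rw [Prod.dist_eq]; exact le_max_right _ _
      have : dist q.2 r.2 * ‖e‖ ≤ dist q.2 r.2 := mul_le_of_le_one_right dist_nonneg he
      linarith
    rw [Real.coe_toNNReal _ (by positivity)]
    have a4 := hy.2
    have a5 := mul_le_mul_of_nonneg_left a3 hK0
    linarith
  have hae := hlip.ae_differentiableWithinAt_of_mem
    (μ := (MeasureTheory.volume : MeasureTheory.Measure (Euc n)).prod MeasureTheory.volume)
  have hd := MeasureTheory.Measure.dense_of_ae hae
  obtain ⟨z, hz1, hz2⟩ := hd.exists_dist_lt (x, t) (lt_min hε ht)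
  rw [dist_comm, lt_min_iff] at hz2
  have hzS : z ∈ S := hz2.2
  exact ⟨z, (hSm z hzS).2.1, hz2.1, (hz1 hzS).differentiableAt (Metric.isOpen_ball.mem_nhds hzS)⟩

lemma Dstar_nonempty (hc : Continuous g) (hg : ∀ y, HasGradientAt g (Dg y) y)
    (hDg : Continuous Dg) (x : Euc n) {t : ℝ} (ht : 0 < t) : (Dstar g (x, t)).Nonempty := by
  choose z h1 h2 h3 using fun k : ℕ =>
    HL_diff hc hg hDg x ht (ε := 1 / ((k : ℝ) + 1)) Nat.one_div_pos_of_nat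
  have hlim : Tendsto z atTop (𝓝 (x, t)) := by
    rw [tendsto_iff_dist_tendsto_zero]
    exact squeeze_zero (fun _ => dist_nonneg) (fun k => (h2 k).le)
      tendsto_one_div_add_atTop_nhds_zero_nat
  choose y hy using fun k => HL_exists hc (z k).1 (h1 k)
  obtain ⟨y₀, hy₀, φ, hφ, hl⟩ := HL_compact hc ht h1 hlim hy
  refine ⟨(Dg y₀, -‖Dg y₀‖), z ∘ φ, fun k => h1 _, hlim.comp hφ.tendsto_atTop,
    fun k => (Dg (y (φ k)), -‖Dg (y (φ k))‖), fun k => ?_, ?_⟩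
  · obtain ⟨w, a, hwa⟩ := exists_gradCLM
      (fderiv ℝ (fun q : Euc n × ℝ => HLu g q.1 q.2) (z (φ k)))
    have h := (h3 (φ k)).hasFDerivAt
    rw [hwa] at h
    obtain ⟨e1, e2⟩ := HL_fderiv hc hg (h1 (φ k)) (hy (φ k)) h
    rw [e1, e2] at h
    exact h
  · have := (hDg.tendsto y₀).comp hl
    exact this.prodMk_nhds this.norm.neg

lemma HL_approach (hc : Continuous g) (hg : ∀ y, HasGradientAt g (Dg y) y)
    (hDg : Continuous Dg) {x y : Euc n} {t : ℝ} (ht : 0 < t) (hy : y ∈ HLL g x t)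
    {ε : ℝ} (hε : 0 < ε) :
    ∃ z : Euc n × ℝ, 0 < z.2 ∧ dist z (x, t) < ε ∧
      ∀ w ∈ HLL g z.1 z.2, ‖Dg w - Dg y‖ < ε := by
  obtain ⟨e, he, rfl⟩ := HL_dir ht hy.1
  have hin := HL_inner hc hg ht he hy
  by_cases hp : Dg (x + t • e) = 0
  · obtain ⟨s, hs0, hs⟩ := exists_between (lt_min hε ht)
    rw [lt_min_iff] at hs
    refine ⟨(x + s • e, t - s), by simpa using hs.2, ?_, ?_⟩
    · rw [Prod.dist_eq, max_lt_iff]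
      constructor
      · simp only [dist_eq_norm, add_sub_cancel_left, norm_smul, Real.norm_of_nonneg hs0.le]
        nlinarith
      · simp only [Real.dist_eq]
        rw [abs_lt]; constructor <;> linarith
    · intro w hw
      simp only at hw
      have hw1 := hw.1
      have hwy : g w ≤ g (x + t • e) := by
        rw [hw.2, show x + t • e = (x + s • e) + (t - s) • e by module]
        exact HL_le' hc (by linarith) he
      have hwx' : ‖w - x‖ ≤ t - s + s * ‖e‖ := by
        have := norm_add_le (w - (x + s • e)) (s • e)
        rw [norm_smul, Real.norm_of_nonneg hs0.le,
          show w - (x + s • e) + s • e = w - x by abel] at this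
        linarith
      have hwx : ‖w - x‖ ≤ t := by nlinarith
      have hwL : w ∈ HLL g x t :=
        ⟨hwx, le_antisymm (hwy.trans hy.2.le) (HL_le hc hwx)⟩
      suffices h : Dg w = 0 by rw [h, hp]; simpa using hε
      by_contra hne
      have hne' : 0 < ‖Dg w‖ := norm_pos_iff.2 hne
      obtain ⟨f, hf, rfl⟩ := HL_dir ht hwx
      have hin2 := HL_inner hc hg ht hf hwL
      have hf1 : ‖f‖ = 1 := by
        have := (abs_le.1 (abs_real_inner_le_norm (Dg (x + t • f)) f)).1
        rw [hin2] at this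
        have : 1 ≤ ‖f‖ := by
          by_contra! h
          nlinarith
        linarith
      rw [add_sub_cancel_left, norm_smul, Real.norm_of_nonneg ht.le, hf1] at hwx'
      have he1 : ‖e‖ = 1 := by
        have : 1 ≤ ‖e‖ := by
          by_contra! h
          nlinarith
        linarith
      rw [show x + t • f - (x + s • e) = t • f - s • e by abel] at hw1
      have h2 : ‖t • f - s • e‖ ^ 2 ≤ (t - s) ^ 2 :=
        pow_le_pow_left₀ (norm_nonneg _) hw1 2
      rw [norm_sub_sq_real, inner_smul_left, inner_smul_right, norm_smul, norm_smul, hf1, he1,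
        Real.norm_of_nonneg ht.le, Real.norm_of_nonneg hs0.le] at h2
      simp only [conj_trivial] at h2
      have h3 : 1 ≤ inner ℝ f e := by
        by_contra! h
        nlinarith [mul_pos ht hs0]
      have h4 : ‖f - e‖ ^ 2 ≤ 0 := by
        rw [norm_sub_sq_real, hf1, he1]; linarith
      have h5 : f - e = 0 := by
        rw [← norm_eq_zero]
        exact pow_eq_zero_iff (two_ne_zero) |>.1 (le_antisymm h4 (sq_nonneg _))
      rw [sub_eq_zero.1 h5] at hne
      exact hne hp
  · have hp0 : 0 < ‖Dg (x + t • e)‖ := norm_pos_iff.2 hp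
    have he1 : ‖e‖ = 1 := by
      have := (abs_le.1 (abs_real_inner_le_norm (Dg (x + t • e)) e)).1
      rw [hin] at this
      have : 1 ≤ ‖e‖ := by
        by_contra! h
        nlinarith
      linarith
    obtain ⟨η, hη, hηc⟩ := Metric.continuousAt_iff.1 (hDg.continuousAt (x := x + t • e)) ε hε
    obtain ⟨κ, hκ0, hκ⟩ := exists_between
      (lt_min (one_pos) (show 0 < η ^ 2 / (2 * t + 1 + 2 * t ^ 2) by positivity))
    rw [lt_min_iff, lt_div_iff₀ (by positivity)] at hκ
    obtain ⟨hκ1, hκ2⟩ := hκ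
    have hd := HL_decr hg (x + t • e) (κ • e) (by
      rw [inner_smul_right, hin]; nlinarith [mul_pos hκ0 hp0])
    have hsm : ∀ᶠ s in 𝓝[>] (0 : ℝ), s < min (min ε t) 1 :=
      nhdsWithin_le_nhds (gt_mem_nhds (by positivity))
    obtain ⟨s, ⟨hs1, hs2⟩, hs0⟩ := ((hd.and hsm).and self_mem_nhdsWithin).exists
    have hs0 : 0 < s := hs0
    rw [lt_min_iff, lt_min_iff] at hs2
    obtain ⟨⟨hsε, hst⟩, hs1'⟩ := hs2
    have hκs : 0 < κ * s := mul_pos hκ0 hs0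
    have hκs' : κ * s < s := by nlinarith
    refine ⟨(x + s • e, t - (1 - κ) * s), ?_, ?_, ?_⟩
    · simp only; linarith
    · rw [Prod.dist_eq, max_lt_iff]
      constructor
      · simp only [dist_eq_norm, add_sub_cancel_left, norm_smul, Real.norm_of_nonneg hs0.le]
        nlinarith
      · simp only [Real.dist_eq]
        rw [abs_lt]; constructor <;> linarith
    · intro w hw
      simp only at hw
      have hw1 := hw.1
      have hwy : g w < g (x + t • e) := by
        refine lt_of_le_of_lt ?_ hs1
        rw [hw.2, show x + t • e + s • κ • e = (x + s • e) + (t - (1 - κ) * s) • e by module]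
        exact HL_le' hc (by linarith) he
      have hwx : t < ‖w - x‖ := by
        by_contra! h
        have := HL_le hc h
        rw [← hy.2] at this
        linarith
      have hwx2 : ‖w - x‖ ≤ t + κ * s := by
        have := norm_add_le (w - (x + s • e)) (s • e)
        rw [norm_smul, Real.norm_of_nonneg hs0.le, he1,
          show w - (x + s • e) + s • e = w - x by abel] at this
        linarith
      rw [← dist_eq_norm]
      apply hηc
      rw [dist_eq_norm]
      refine lt_of_pow_lt_pow_left₀ 2 hη.le ?_
      rw [show w - (x + s • e) = (w - x) - s • e by abel] at hw1
      rw [show w - (x + t • e) = (w - x) - t • e by abel]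
      have h2 := pow_le_pow_left₀ (norm_nonneg _) hw1 2
      rw [norm_sub_sq_real, inner_smul_right, norm_smul, he1, Real.norm_of_nonneg hs0.le] at h2
      rw [norm_sub_sq_real, inner_smul_right, norm_smul, he1, Real.norm_of_nonneg ht.le]
      set I := inner ℝ (w - x) e
      set R := ‖w - x‖
      have hR : t ^ 2 < R ^ 2 := by nlinarith
      have hR2 : R ^ 2 ≤ (t + κ * s) ^ 2 := pow_le_pow_left₀ (norm_nonneg _) hwx2 2
      have hI : t * (1 - κ) ≤ I := by
        by_contra! h
        have h3 := mul_pos hs0 (sub_pos.2 h)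
        have h4 : (1 - κ) ^ 2 * s ^ 2 ≤ s ^ 2 := by
          apply mul_le_of_le_one_left (sq_nonneg _)
          nlinarith
        nlinarith
      have h5 : κ * s ≤ κ := by nlinarith
      have h6 : (κ * s) ^ 2 ≤ κ := by nlinarith
      nlinarith [mul_le_mul_of_nonneg_left hI ht.le, mul_le_mul_of_nonneg_left h5 ht.le]

end helpers

theorem Dstar_eq_gradients_of_minimizers {n : ℕ} (hn : 0 < n) (g : Euc n → ℝ) (Dg : Euc n → Euc n)
    (hg : ∀ y, HasGradientAt g (Dg y) y) (hDg : Continuous Dg)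
    (x : Euc n) (t : ℝ) (ht : 0 < t) :
    Dstar g (x, t) = {q : Euc n × ℝ | ∃ y ∈ HLL g x t, q = (Dg y, -‖Dg y‖)} ∧
    Set.InjOn Prod.fst (Dstar g (x, t)) ∧
    Prod.fst '' Dstar g (x, t) = {v : Euc n | ∃ y ∈ HLL g x t, v = Dg y} := by
  have hc : Continuous g := continuous_iff_continuousAt.2 fun y => (hg y).continuousAt
  have main : Dstar g (x, t) = {q : Euc n × ℝ | ∃ y ∈ HLL g x t, q = (Dg y, -‖Dg y‖)} := by
    apply Set.Subset.antisymm
    · intro q hq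
      exact Dstar_sub hc hg hDg ht hq
    · rintro q ⟨y, hy, rfl⟩
      apply Dstar_of_approx
      intro ε hε
      obtain ⟨z, hz, hzd, hzw⟩ := HL_approach hc hg hDg ht hy (half_pos hε)
      obtain ⟨q, hq⟩ := Dstar_nonempty hc hg hDg z.1 hz
      obtain ⟨w, hw, rfl⟩ := Dstar_sub hc hg hDg hz hq
      obtain ⟨z', d, h1, h2, h3, h4⟩ := Dstar_approx hq (half_pos hε)
      refine ⟨z', d, h1, ?_, h3, ?_⟩
      · have := dist_triangle z' z (x, t)
        have h2 : dist z' z < ε / 2 := h2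
        linarith
      · have h5 : dist (Dg w, -‖Dg w‖) (Dg y, -‖Dg y‖) < ε / 2 := by
          have h6 := hzw w hw
          rw [Prod.dist_eq, max_lt_iff]
          refine ⟨by rwa [dist_eq_norm], ?_⟩
          simp only [Real.dist_eq]
          rw [show -‖Dg w‖ - -‖Dg y‖ = -(‖Dg w‖ - ‖Dg y‖) by ring, abs_neg]
          exact (abs_norm_sub_norm_le _ _).trans_lt h6
        have := dist_triangle d (Dg w, -‖Dg w‖) (Dg y, -‖Dg y‖)
        linarith
  refine ⟨main, ?_, ?_⟩
  · rw [main]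
    rintro _ ⟨y, hy, rfl⟩ _ ⟨y', hy', rfl⟩ h
    simp only at h
    rw [h]
  · rw [main]
    ext v
    constructor
    · rintro ⟨_, ⟨y, hy, rfl⟩, rfl⟩
      exact ⟨y, hy, rfl⟩
    · rintro ⟨y, hy, rfl⟩
      exact ⟨_, ⟨y, hy, rfl⟩, rfl⟩
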